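/- arXiv:1207.3572 — 8 statements merged into one kernel-verified Lean document; each statement's English description precedes it below -/
import Mathlib

section
/- Let L ≥ 3 be an integer and let P be a real number with 0 < P ≤ 1. Then ((1 + L·P)/(1 + P))^(L−1) ≥ 1 + P; equivalently, (1/(2(L−1))) · log₂(1 + P) ≤ (1/(2L)) · log₂(1 + L·P). -/
/-! Write `(1 + L P) / (1 + P) = 1 + (L - 1) P / (1 + P)`. Bernoulli's inequality bounds its
`(L - 1)`-th power below by `1 + (L - 1)² P / (1 + P)`, and this is at least `1 + P` because
`(L - 1)² ≥ 4 > 1 + P`. Clearing the denominator gives `(1 + P) ^ L ≤ (1 + L P) ^ (L - 1)`,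
and taking logarithms gives the comparison of the two rates. -/

theorem cdf_achieves_capacity_lowSNR (L : ℕ) (hL : 3 ≤ L) (P : ℝ) (hP0 : 0 < P) (hP1 : P ≤ 1) :
    ((1 + (L : ℝ) * P) / (1 + P)) ^ (L - 1) ≥ 1 + P ∧
      1 / (2 * ((L : ℝ) - 1)) * Real.logb 2 (1 + P) ≤
        1 / (2 * (L : ℝ)) * Real.logb 2 (1 + (L : ℝ) * P) := by
  obtain ⟨n, rfl⟩ : ∃ n, L = n + 1 := ⟨L - 1, by omega⟩
  have hn : (2 : ℝ) ≤ n := by exact_mod_cast (by omega : 2 ≤ n)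
  simp only [Nat.add_sub_cancel, Nat.cast_add, Nat.cast_one, add_sub_cancel_right]
  have hp : 0 < 1 + P := by linarith
  have hq : 0 < 1 + ((n : ℝ) + 1) * P := by positivity
  have key : 1 + P ≤ ((1 + ((n : ℝ) + 1) * P) / (1 + P)) ^ n := by
    have hx : 0 ≤ n * P / (1 + P) := by positivity
    calc 1 + P ≤ 1 + n * (n * P / (1 + P)) := by
          rw [add_le_add_iff_left, ← mul_div_assoc, le_div_iff₀ hp]
          have h4 : 1 + P ≤ (n : ℝ) * n := by nlinarith
          nlinarith [mul_le_mul_of_nonneg_left h4 hP0.le]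
      _ ≤ (1 + n * P / (1 + P)) ^ n := one_add_mul_le_pow (by linarith) n
      _ = _ := by
          congr 1
          field_simp
          ring
  refine ⟨key, ?_⟩
  have hlog := Real.logb_le_logb_of_le one_lt_two hp key
  rw [Real.logb_pow, Real.logb_div hq.ne' hp.ne'] at hlog
  rw [one_div_mul_eq_div, one_div_mul_eq_div, div_le_div_iff₀ (by positivity) (by positivity)]
  linarith
end

section
/- For every integer L ≥ 3, there exists a real number P* ≥ 1 such that for all real P with 0 < P ≤ P* one has ((1 + L·P)/(1 + P))^(L−1) ≥ 1 + P, and for all real P > P* one has ((1 + L·P)/(1 + P))^(L−1) < 1 + P. -/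
/-!
Put `n = L - 1` and `t = P / (1 + P) ∈ (0, 1)`. Then `(1 + L P) / (1 + P) = 1 + n t` and
`1 + P = (1 - t)⁻¹`, so the inequality `α ≥ β` reads `(1 + n t) ^ n * (1 - t) ≥ 1`. The logarithm
of the left-hand side is concave in `t` and vanishes at `t = 0`, so the solution set is
downward closed (`one_add_le_ratio_pow_of_le`); concavity is used in the form of Bernoulli's
inequality `(1 + x) ^ c ≤ 1 + c x` for `c ∈ [0, 1]`. The solution set contains `P = 1`, and it is
bounded by `L ^ (L - 1)` because `(1 + L P) / (1 + P) ≤ L`. Its part in `[1, L ^ (L - 1)]` is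
compact and nonempty, and the greatest element is the crossing point.
-/

/-- The set of `P > 0` with `α ≥ β` is downward closed (with `L = n + 1`). -/
lemma one_add_le_ratio_pow_of_le (n : ℕ) {p q : ℝ} (hq : 0 < q) (hqp : q ≤ p)
    (h : 1 + p ≤ ((1 + ((n : ℝ) + 1) * p) / (1 + p)) ^ n) :
    1 + q ≤ ((1 + ((n : ℝ) + 1) * q) / (1 + q)) ^ n := by
  have hp : 0 < p := hq.trans_le hqp
  -- `c` is the ratio of the values `q / (1 + q)` and `p / (1 + p)` of the parameter `t`.
  obtain ⟨c, hc⟩ : ∃ c : ℝ, c = q * (1 + p) / (p * (1 + q)) := ⟨_, rfl⟩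
  have hc0 : 0 ≤ c := by rw [hc]; positivity
  have hc1 : c ≤ 1 := by
    rw [hc, div_le_one (by positivity)]
    linarith
  set A := (1 + ((n : ℝ) + 1) * p) / (1 + p) with hA
  have hA0 : 0 ≤ A := by positivity
  have hB : A ^ c ≤ (1 + ((n : ℝ) + 1) * q) / (1 + q) := by
    have hb := rpow_one_add_le_one_add_mul_self (s := A - 1) (by linarith) hc0 hc1
    rw [add_sub_cancel] at hb
    refine hb.trans_eq ?_
    rw [hA, hc]
    field_simp
    ring
  have hq' : 1 + q ≤ (1 + p) ^ c := by
    have hb := rpow_one_add_le_one_add_mul_self (s := (1 + p)⁻¹ - 1)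
      (by linarith [inv_pos.2 (by linarith : 0 < 1 + p)]) hc0 hc1
    have he : 1 + c * ((1 + p)⁻¹ - 1) = (1 + q)⁻¹ := by
      rw [hc]
      field_simp
      ring
    rw [add_sub_cancel, he, Real.inv_rpow (by positivity)] at hb
    exact (inv_le_inv₀ (by positivity) (by positivity)).1 hb
  calc 1 + q ≤ (1 + p) ^ c := hq'
    _ ≤ (A ^ n) ^ c := Real.rpow_le_rpow (by positivity) h hc0
    _ = (A ^ c) ^ n := (Real.rpow_pow_comm hA0 c n).symm
    _ ≤ _ := pow_le_pow_left₀ (by positivity) hB n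

theorem exists_crossing_point (L : ℕ) (hL : 3 ≤ L) :
    ∃ Pstar : ℝ, 1 ≤ Pstar ∧
      (∀ P : ℝ, 0 < P → P ≤ Pstar → ((1 + (L : ℝ) * P) / (1 + P)) ^ (L - 1) ≥ 1 + P) ∧
      (∀ P : ℝ, Pstar < P → ((1 + (L : ℝ) * P) / (1 + P)) ^ (L - 1) < 1 + P) := by
  obtain ⟨n, rfl⟩ : ∃ n, L = n + 1 := ⟨L - 1, by omega⟩
  have hn : 2 ≤ n := by omega
  have hn' : (2 : ℝ) ≤ n := by exact_mod_cast hn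
  simp only [Nat.add_sub_cancel, Nat.cast_add, Nat.cast_one, ge_iff_le]
  have hbound : ∀ P : ℝ, 1 ≤ P → 1 + P ≤ ((1 + ((n : ℝ) + 1) * P) / (1 + P)) ^ n →
      P ≤ ((n : ℝ) + 1) ^ n := by
    intro P hP h
    have : (1 + ((n : ℝ) + 1) * P) / (1 + P) ≤ (n : ℝ) + 1 := by
      rw [div_le_iff₀ (by linarith)]
      linarith
    have := pow_le_pow_left₀ (by positivity) this n
    linarith
  have h1 : 1 + (1 : ℝ) ≤ ((1 + ((n : ℝ) + 1) * 1) / (1 + 1)) ^ n := by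
    have h2 : (2 : ℝ) ≤ (1 + ((n : ℝ) + 1) * 1) / (1 + 1) := by linarith
    calc 1 + (1 : ℝ) ≤ 2 ^ 1 := by norm_num
      _ ≤ 2 ^ n := pow_le_pow_right₀ (by norm_num) (by omega)
      _ ≤ _ := pow_le_pow_left₀ (by norm_num) h2 n
  have hcont : ContinuousOn (fun P : ℝ => ((1 + ((n : ℝ) + 1) * P) / (1 + P)) ^ n)
      (Set.Icc 1 (((n : ℝ) + 1) ^ n)) := by
    refine ContinuousOn.pow (ContinuousOn.div (by fun_prop) (by fun_prop) ?_) n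
    intro P hP
    linarith [hP.1]
  have hcompact : IsCompact {P ∈ Set.Icc (1 : ℝ) (((n : ℝ) + 1) ^ n) |
      1 + P ≤ ((1 + ((n : ℝ) + 1) * P) / (1 + P)) ^ n} :=
    isCompact_Icc.of_isClosed_subset
      (isClosed_Icc.isClosed_le (by fun_prop) hcont) (Set.sep_subset _ _)
  obtain ⟨M, ⟨⟨hM1, -⟩, hM⟩, hmax⟩ :=
    hcompact.exists_isGreatest ⟨1, ⟨le_rfl, hbound 1 le_rfl h1⟩, h1⟩
  refine ⟨M, hM1, fun P hP hPM => one_add_le_ratio_pow_of_le n hP hPM hM, fun P hMP => ?_⟩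
  by_contra! h
  have hP1 : 1 ≤ P := hM1.trans hMP.le
  exact hMP.not_ge (hmax ⟨⟨hP1, hbound P hP1 h⟩, h⟩)
end

section
/- For every real number P > 0, (1/2) · log₂(1 + P) < (1/2) · log₂(1/2 + P) + 1/(2·(2P + 1)·ln 2). -/
/-! The gap between the two logarithms is the logarithm of the ratio
`(1 + P) / (1 / 2 + P) = 1 + 1 / (2 * P + 1)`, and `log x < x - 1` for `x ≠ 1` bounds it by
`1 / (2 * P + 1)`; dividing by `2 * log 2` converts to bits. -/

theorem twrc_fdf_gap (P : ℝ) (hP : 0 < P) :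
    1 / 2 * Real.logb 2 (1 + P) <
      1 / 2 * Real.logb 2 (1 / 2 + P) + 1 / (2 * (2 * P + 1) * Real.log 2) := by
  have h2 : 0 < Real.log 2 := Real.log_pos one_lt_two
  have hd : 0 < 2 * P + 1 := by positivity
  have hq : 0 < 1 / (2 * P + 1) := by positivity
  have hratio : (1 + P) / (1 / 2 + P) = 1 + 1 / (2 * P + 1) := by
    have : 1 / 2 + P ≠ 0 := by positivity
    field_simp
    ring
  have hlog : Real.log (1 + P) - Real.log (1 / 2 + P) < 1 / (2 * P + 1) := by
    rw [← Real.log_div (by positivity) (by positivity), hratio]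
    have := Real.log_lt_sub_one_of_pos (x := 1 + 1 / (2 * P + 1)) (by positivity)
      (by linarith)
    linarith
  have hbits : 1 / (2 * (2 * P + 1) * Real.log 2)
      = 1 / 2 * (1 / (2 * P + 1) / Real.log 2) := by
    field_simp
  have hdiv := div_lt_div_of_pos_right hlog h2
  rw [sub_div] at hdiv
  rw [hbits, Real.logb, Real.logb]
  linarith
end

section
/- Let L ≥ 3 be an integer and let P be a real number with P ≥ L^(L−1) − 1. Then (1/(2L)) · log₂(1 + L·P) < (1/(2(L−1))) · log₂(1 + P). -/
/-! Clearing denominators, the claim is `(L - 1) log₂ (1 + L P) < L log₂ (1 + P)`. Since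
`1 + L P < L (1 + P)`, the left side is below `(L - 1) log₂ L + (L - 1) log₂ (1 + P)`, and the
hypothesis `L ^ (L - 1) ≤ 1 + P` says exactly that `(L - 1) log₂ L ≤ log₂ (1 + P)`. -/

theorem cdf_below_capacity (L : ℕ) (hL : 3 ≤ L) (P : ℝ) (hP : (L : ℝ) ^ (L - 1) - 1 ≤ P) :
    1 / (2 * (L : ℝ)) * Real.logb 2 (1 + (L : ℝ) * P) <
      1 / (2 * ((L : ℝ) - 1)) * Real.logb 2 (1 + P) := by
  have hL3 : (3 : ℝ) ≤ L := by exact_mod_cast hL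
  have hpow : (1 : ℝ) ≤ (L : ℝ) ^ (L - 1) := one_le_pow₀ (by linarith)
  have hP0 : 0 ≤ P := by linarith
  have hLP : 0 ≤ (L : ℝ) * P := by positivity
  have h1 : Real.logb 2 (1 + (L : ℝ) * P) < Real.logb 2 L + Real.logb 2 (1 + P) := by
    rw [← Real.logb_mul (by linarith) (by linarith)]
    exact Real.logb_lt_logb (by norm_num) (by linarith) (by linarith)
  have h2 : ((L : ℝ) - 1) * Real.logb 2 L ≤ Real.logb 2 (1 + P) := by
    have h := Real.logb_le_logb_of_le (b := 2) (by norm_num) (by linarith)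
      (show (L : ℝ) ^ (L - 1) ≤ 1 + P by linarith)
    rwa [Real.logb_pow, Nat.cast_sub (by omega), Nat.cast_one] at h
  have h3 := mul_lt_mul_of_pos_left h1 (show (0 : ℝ) < (L : ℝ) - 1 by linarith)
  rw [one_div_mul_eq_div, one_div_mul_eq_div, div_lt_div_iff₀ (by linarith) (by linarith)]
  linarith
end

section
/- Let L ≥ 3 be a fixed integer. Then the function P ↦ (1/(2(L−1))) · log₂(1 + P) − (1/(2L)) · log₂(1 + L·P) tends to +∞ as P → +∞. -/
/-!
For `P ≥ 0`, `1 + L P ≤ L (1 + P)`, so the gap is at least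
`(1 / (2 (L - 1)) - 1 / (2 L)) * logb 2 (1 + P) - logb 2 L / (2 L)`.
The coefficient of `logb 2 (1 + P)` is positive, so this lower bound tends to `+∞`.
-/

theorem cdf_gap_tendsto_atTop (L : ℕ) (hL : 3 ≤ L) :
    Filter.Tendsto
      (fun P : ℝ =>
        1 / (2 * ((L : ℝ) - 1)) * Real.logb 2 (1 + P) -
          1 / (2 * (L : ℝ)) * Real.logb 2 (1 + (L : ℝ) * P))
      Filter.atTop Filter.atTop := by
  have hL' : (3 : ℝ) ≤ L := by exact_mod_cast hL
  have hc : 0 < 1 / (2 * ((L : ℝ) - 1)) - 1 / (2 * (L : ℝ)) :=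
    sub_pos.2 (one_div_lt_one_div_of_lt (by linarith) (by linarith))
  have hlog : Filter.Tendsto (fun P : ℝ => Real.logb 2 (1 + P)) Filter.atTop Filter.atTop :=
    (Real.tendsto_logb_atTop one_lt_two).comp
      (Filter.tendsto_atTop_add_const_left _ 1 Filter.tendsto_id)
  refine Filter.tendsto_atTop_mono' _ ?_ (Filter.tendsto_atTop_add_const_right _
    (-(1 / (2 * (L : ℝ)) * Real.logb 2 L)) (hlog.const_mul_atTop hc))
  filter_upwards [Filter.eventually_ge_atTop 0] with P hP
  have hle : Real.logb 2 (1 + L * P) ≤ Real.logb 2 L + Real.logb 2 (1 + P) := by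
    rw [← Real.logb_mul (by positivity) (by positivity)]
    exact Real.logb_le_logb_of_le one_lt_two (by positivity) (by linarith)
  have hmul := mul_le_mul_of_nonneg_left hle (by positivity : 0 ≤ 1 / (2 * (L : ℝ)))
  linarith
end

section
/- Let L ≥ 2 be a fixed integer. Then as P → +∞, the function P ↦ (1/(2(L−1))) · log₂(1 + P) − (1/(2(L−1))) · log₂(1 + (L−1)·P²/(1 + L·P)) converges to (1/(2(L−1))) · log₂(1 + 1/(L−1)). -/
/-!
Since `1 + L P + (L - 1) P² = (1 + P) (1 + (L - 1) P)`, the argument of the second logarithm is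
`(1 + P) (1 + (L - 1) P) / (1 + L P)`. For `P > 0` the factor `1 + P` therefore cancels in the
difference of the logarithms, which equals `log₂ (1 + 1 / (P⁻¹ + (L - 1)))`. The limit follows
from `P⁻¹ → 0` and continuity of the logarithm at `1 + 1 / (L - 1) > 0`.
-/

theorem cf_gap_tendsto (L : ℕ) (hL : 2 ≤ L) :
    Filter.Tendsto
      (fun P : ℝ =>
        1 / (2 * ((L : ℝ) - 1)) * Real.logb 2 (1 + P) -
          1 / (2 * ((L : ℝ) - 1)) *
            Real.logb 2 (1 + ((L : ℝ) - 1) * P ^ 2 / (1 + (L : ℝ) * P)))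
      Filter.atTop
      (nhds (1 / (2 * ((L : ℝ) - 1)) * Real.logb 2 (1 + 1 / ((L : ℝ) - 1)))) := by
  have hL' : (2 : ℝ) ≤ L := by exact_mod_cast hL
  have hm : (0 : ℝ) < (L : ℝ) - 1 := by linarith
  have hpos : (0 : ℝ) < 1 + 1 / ((L : ℝ) - 1) := by positivity
  have hlim : Filter.Tendsto (fun P : ℝ => 1 + 1 / (P⁻¹ + ((L : ℝ) - 1))) Filter.atTop
      (nhds (1 + 1 / ((L : ℝ) - 1))) := by
    have h : Filter.Tendsto (fun P : ℝ => P⁻¹ + ((L : ℝ) - 1)) Filter.atTop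
        (nhds ((L : ℝ) - 1)) := by
      simpa using (tendsto_inv_atTop_zero (𝕜 := ℝ)).add_const ((L : ℝ) - 1)
    exact (tendsto_const_nhds.div h hm.ne').const_add 1
  have hlog : Filter.Tendsto (fun P : ℝ => Real.logb 2 (1 + 1 / (P⁻¹ + ((L : ℝ) - 1))))
      Filter.atTop (nhds (Real.logb 2 (1 + 1 / ((L : ℝ) - 1)))) :=
    (hlim.log hpos.ne').div_const (Real.log 2)
  refine (hlog.const_mul (1 / (2 * ((L : ℝ) - 1)))).congr' ?_
  filter_upwards [Filter.eventually_gt_atTop 0] with P hP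
  have h1 : (0 : ℝ) < 1 + P := by positivity
  have h2 : (0 : ℝ) < 1 + L * P := by positivity
  have h3 : (0 : ℝ) < 1 + ((L : ℝ) - 1) * P ^ 2 / (1 + L * P) := by positivity
  have h4 : (0 : ℝ) < P⁻¹ + ((L : ℝ) - 1) := by positivity
  have h5 : (0 : ℝ) < 1 + ((L : ℝ) - 1) * P := by positivity
  rw [← mul_sub, ← Real.logb_div h1.ne' h3.ne']
  congr 2
  have e1 : 1 + ((L : ℝ) - 1) * P ^ 2 / (1 + L * P)
      = (1 + P) * (1 + ((L : ℝ) - 1) * P) / (1 + L * P) := by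
    field_simp
    ring
  have e2 : P⁻¹ + ((L : ℝ) - 1) = (1 + ((L : ℝ) - 1) * P) / P := by
    field_simp
  rw [e1, e2]
  field_simp
  ring
end

section
/- Let L ≥ 2 be a fixed integer. Then as P → +∞, the function P ↦ (1/(2(L−1))) · log₂(1 + L·P) − (1/(2(L−1))) · log₂(1 + L·(L−1)·P²/(1 + (L−1)·P + L·P)) converges to (1/(2(L−1))) · log₂(1 + L/(L−1)). -/
/-!
The relation `(1 + L P) (1 + (L - 1) P) = 1 + (L - 1) P + L P + L (L - 1) P ^ 2` shows that the
compress-forward argument is `(1 + L P) (1 + (L - 1) P) / (1 + (L - 1) P + L P)`. The factor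
`1 + L P` cancels against the upper bound, so for `P > 0` the gap is exactly
`1 / (2 (L - 1)) * logb 2 (1 + L / (P⁻¹ + (L - 1)))`, and the limit follows by continuity.
-/

theorem cf_gap_tendsto_scaling (L : ℕ) (hL : 2 ≤ L) :
    Filter.Tendsto
      (fun P : ℝ =>
        1 / (2 * ((L : ℝ) - 1)) * Real.logb 2 (1 + (L : ℝ) * P) -
          1 / (2 * ((L : ℝ) - 1)) *
            Real.logb 2
              (1 + (L : ℝ) * ((L : ℝ) - 1) * P ^ 2 / (1 + ((L : ℝ) - 1) * P + (L : ℝ) * P)))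
      Filter.atTop
      (nhds (1 / (2 * ((L : ℝ) - 1)) * Real.logb 2 (1 + (L : ℝ) / ((L : ℝ) - 1)))) := by
  have hL' : (2 : ℝ) ≤ L := by exact_mod_cast hL
  generalize (L : ℝ) = l at hL' ⊢
  obtain ⟨m, rfl⟩ : ∃ m, l = m + 1 := ⟨l - 1, by ring⟩
  have hm : 0 < m := by linarith
  simp only [add_sub_cancel_right]
  have hlim : Filter.Tendsto (fun P : ℝ => 1 + (m + 1) / (P⁻¹ + m)) Filter.atTop
      (nhds (1 + (m + 1) / m)) := by
    have h : Filter.Tendsto (fun P : ℝ => P⁻¹ + m) Filter.atTop (nhds m) := by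
      simpa using tendsto_inv_atTop_zero.add_const m
    exact (tendsto_const_nhds.div h hm.ne').const_add 1
  have hne : 1 + (m + 1) / m ≠ 0 := by positivity
  refine (((hlim.log hne).div_const (Real.log 2)).const_mul (1 / (2 * m))).congr' ?_
  filter_upwards [Filter.eventually_gt_atTop 0] with P hP
  rw [← mul_sub, ← Real.logb_div (by positivity) (by positivity), Real.logb]
  congr 3
  have h : 1 + (m + 1) * m * P ^ 2 / (1 + m * P + (m + 1) * P) =
      (1 + (m + 1) * P) * (1 + m * P) / (1 + m * P + (m + 1) * P) := by
    field_simp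
    ring
  rw [h]
  field_simp
end

section
/- Let L ≥ 2 be an integer and let P be a real number with P > (L − 1 + √((L−1)² + 4L))/(2L). Then (1/(2(L−1))) · log₂(1/2 + (L/2)·P) > (1/(2(L−1))) · log₂(1 + L·(L−1)·P²/(1 + (L−1)·P + L·P)). -/
/-!
Since `1 / (2 (L - 1)) > 0` and `logb 2` is strictly increasing, the claim compares the arguments
of the two logarithms. Writing `D = 1 + (L - 1) P + L P > 0`, one has
`(1/2 + (L/2) P) D - (D + L (L - 1) P²) = (L P² - (L - 1) P - 1) / 2`,
and the threshold on `P` is the larger root of the quadratic on the right.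
-/

theorem fdf_gt_cf_highSNR (L : ℕ) (hL : 2 ≤ L) (P : ℝ)
    (hP : ((L : ℝ) - 1 + Real.sqrt (((L : ℝ) - 1) ^ 2 + 4 * (L : ℝ))) / (2 * (L : ℝ)) < P) :
    1 / (2 * ((L : ℝ) - 1)) * Real.logb 2 (1 / 2 + ((L : ℝ) / 2) * P) >
      1 / (2 * ((L : ℝ) - 1)) *
        Real.logb 2
          (1 + (L : ℝ) * ((L : ℝ) - 1) * P ^ 2 / (1 + ((L : ℝ) - 1) * P + (L : ℝ) * P)) := by
  have hl : (2 : ℝ) ≤ (L : ℝ) := by exact_mod_cast hL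
  generalize (L : ℝ) = l at *
  have hl1 : 0 < l - 1 := by linarith
  have hs : 0 ≤ Real.sqrt ((l - 1) ^ 2 + 4 * l) := Real.sqrt_nonneg _
  have hP0 : 0 < P := lt_of_le_of_lt (by positivity) hP
  rw [div_lt_iff₀ (by linarith)] at hP
  have hquad : 0 < l * P ^ 2 - (l - 1) * P - 1 := by
    -- Completing the square: `4 l` times the quadratic is `(2 l P - (l - 1))² - ((l - 1)² + 4 l)`.
    have hsq : (l - 1) ^ 2 + 4 * l < (P * (2 * l) - (l - 1)) ^ 2 :=
      Real.lt_sq_of_sqrt_lt (by linarith)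
    have h4 : 0 < (4 * l) * (l * P ^ 2 - (l - 1) * P - 1) := by linarith
    exact pos_of_mul_pos_right h4 (by linarith)
  have hD : 0 < 1 + (l - 1) * P + l * P := by positivity
  refine mul_lt_mul_of_pos_left (Real.logb_lt_logb (by norm_num) (by positivity) ?_) (by positivity)
  rw [← lt_sub_iff_add_lt', div_lt_iff₀ hD]
  linarith
end
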